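/- There is a constant C > 0 such that for all integers N ≥ 1, q ≥ 1, j ≥ 1, a with gcd(a,q) = 1 and all real R ≥ 2, one has |Σ_{n ≤ N, n ≡ a (mod q)} λ_R(n)·λ_R(n+jq) − (N/φ(q))·𝔖(jq)| ≤ C·( (N·g(q)/(φ(q)·R))·(j·d(j)/φ(j)) + R² ). -/

import Mathlib

open Finset ArithmeticFunction

/-- The Generalized Riemann Hypothesis for Dirichlet L-functions: every zero of a
Dirichlet L-function in the critical strip lies on the critical line. -/
def GRH : Prop :=
  ∀ (N : ℕ) [NeZero N] (χ : DirichletCharacter ℂ N) (s : ℂ),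
    DirichletCharacter.LFunction χ s = 0 → 0 < s.re → s.re < 1 → s.re = 1 / 2

/-- `ψ(x; q, a) = ∑_{n ≤ x, n ≡ a (mod q)} Λ(n)`. -/
noncomputable def psi (x : ℝ) (q a : ℕ) : ℝ :=
  ∑ n ∈ (Finset.Icc 1 ⌊x⌋₊).filter (fun n : ℕ => (n : ZMod q) = (a : ZMod q)),
    ArithmeticFunction.vonMangoldt n

/-- `I(x,h,q,a) = ∫_x^{2x} (ψ(y+h;q,a) − ψ(y;q,a) − h/φ(q))² dy`. -/
noncomputable def momentI (x h : ℝ) (q a : ℕ) : ℝ :=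
  ∫ y in x..(2 * x), (psi (y + h) q a - psi y q a - h / (q.totient : ℝ)) ^ 2

/-- `λ_R(n) = ∑_{r ≤ R} (μ²(r)/φ(r)) ∑_{d ∣ (r,n)} d·μ(d)`. -/
noncomputable def lamR (R : ℝ) (n : ℕ) : ℝ :=
  ∑ r ∈ Finset.Icc 1 ⌊R⌋₊,
    ((ArithmeticFunction.moebius r : ℝ) ^ 2 / (r.totient : ℝ)) *
      ∑ d ∈ (Nat.gcd r n).divisors, (d : ℝ) * (ArithmeticFunction.moebius d : ℝ)

/-- `c = γ + ∑_p (log p)/(p(p−1))`. -/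
noncomputable def cGY : ℝ :=
  Real.eulerMascheroniConstant +
    ∑' p : Nat.Primes, Real.log (p : ℕ) / (((p : ℕ) : ℝ) * (((p : ℕ) : ℝ) - 1))

/-- `v(k) = ∑_{p ∣ k} (log p)/p`. -/
noncomputable def vGY (k : ℕ) : ℝ := ∑ p ∈ k.primeFactors, Real.log p / (p : ℝ)

/-- `w(k) = ∏_{p ∣ k} (1 + 1/√p)`. -/
noncomputable def wGY (k : ℕ) : ℝ := ∏ p ∈ k.primeFactors, (1 + 1 / Real.sqrt p)

/-- `g(k) = ∏_{p ∣ k} (1 + p/(p−1))`. -/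
noncomputable def gGY (k : ℕ) : ℝ := ∏ p ∈ k.primeFactors, (1 + (p : ℝ) / ((p : ℝ) - 1))

/-- The twin prime constant `C = ∏_{p > 2} (1 − 1/(p−1)²)`. -/
noncomputable def twinC : ℝ :=
  ∏' p : Nat.Primes, (if 2 < (p : ℕ) then 1 - 1 / (((p : ℕ) : ℝ) - 1) ^ 2 else 1)

/-- The singular series `𝔖(k)`. -/
noncomputable def singSeries (k : ℕ) : ℝ :=
  if 2 ∣ k ∧ k ≠ 0 then
    2 * twinC * ∏ p ∈ k.primeFactors.filter (fun p => 2 < p), ((p : ℝ) - 1) / ((p : ℝ) - 2)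
  else 0

/-- `f(n,x,h)`, the length of the interval `[x,2x] ∩ [n−h,n)`. -/
noncomputable def flen (n : ℕ) (x h : ℝ) : ℝ :=
  if x ≤ n ∧ (n : ℝ) < x + h then (n : ℝ) - x
  else if x + h ≤ n ∧ (n : ℝ) ≤ 2 * x then h
  else if 2 * x < n ∧ (n : ℝ) ≤ 2 * x + h then 2 * x - n + h
  else 0


/-- The multiplicative function supported on squarefree numbers with prime values `c p`. -/
noncomputable def sqf (c : ℕ → ℝ) (n : ℕ) : ℝ :=
  if Squarefree n then ∏ p ∈ n.primeFactors, c p else 0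

lemma sqf_of_sq (c : ℕ → ℝ) {n : ℕ} (h : Squarefree n) :
    sqf c n = ∏ p ∈ n.primeFactors, c p := if_pos h

lemma sqf_of_not (c : ℕ → ℝ) {n : ℕ} (h : ¬ Squarefree n) : sqf c n = 0 := if_neg h

lemma sqf_one (c : ℕ → ℝ) : sqf c 1 = 1 := by simp [sqf]

lemma sqf_zero (c : ℕ → ℝ) : sqf c 0 = 0 := by simp [sqf]

lemma sqf_prime (c : ℕ → ℝ) {p : ℕ} (hp : p.Prime) : sqf c p = c p := by
  rw [sqf_of_sq c hp.prime.squarefree, hp.primeFactors, Finset.prod_singleton]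

lemma sqf_mul (c : ℕ → ℝ) {m n : ℕ} (h : m.Coprime n) : sqf c (m * n) = sqf c m * sqf c n := by
  unfold sqf
  simp only [Nat.squarefree_mul h]
  by_cases h1 : Squarefree m <;> by_cases h2 : Squarefree n <;> simp only [h1, h2, and_self,
    and_true, if_true, if_false, zero_mul, mul_zero, and_false]
  rw [h.primeFactors_mul, Finset.prod_union h.disjoint_primeFactors]

lemma sqf_prime_pow (c : ℕ → ℝ) {p : ℕ} (hp : p.Prime) {e : ℕ} (he : 2 ≤ e) :
    sqf c (p ^ e) = 0 := by
  apply sqf_of_not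
  intro h
  have := (Nat.squarefree_pow_iff hp.ne_one (by omega)).1 h
  omega

lemma sqf_mul_sqf (c c' : ℕ → ℝ) (n : ℕ) : sqf c n * sqf c' n = sqf (fun p => c p * c' p) n := by
  unfold sqf
  split_ifs <;> simp [Finset.prod_mul_distrib]

lemma sqf_congr {c c' : ℕ → ℝ} {n : ℕ} (h : ∀ p, p.Prime → p ∣ n → c p = c' p) :
    sqf c n = sqf c' n := by
  unfold sqf
  split_ifs with hs
  · exact Finset.prod_congr rfl fun p hp =>
      h p (Nat.prime_of_mem_primeFactors hp) (Nat.dvd_of_mem_primeFactors hp)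
  · rfl

lemma sqf_nonneg {c : ℕ → ℝ} (h : ∀ p, p.Prime → 0 ≤ c p) (n : ℕ) : 0 ≤ sqf c n := by
  unfold sqf
  split_ifs with hs
  · exact Finset.prod_nonneg fun p hp => h p (Nat.prime_of_mem_primeFactors hp)
  · exact le_rfl

lemma sqf_le {c c' : ℕ → ℝ} (h : ∀ p, p.Prime → 0 ≤ c p) (h' : ∀ p, p.Prime → c p ≤ c' p)
    (n : ℕ) : sqf c n ≤ sqf c' n := by
  unfold sqf
  split_ifs with hs
  · exact Finset.prod_le_prod (fun p hp => h p (Nat.prime_of_mem_primeFactors hp))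
      (fun p hp => h' p (Nat.prime_of_mem_primeFactors hp))
  · exact le_rfl

lemma abs_sqf (c : ℕ → ℝ) (n : ℕ) : |sqf c n| = sqf (fun p => |c p|) n := by
  unfold sqf
  split_ifs <;> simp [Finset.abs_prod]

lemma sum_sqf (c : ℕ → ℝ) {n : ℕ} (hn : n ≠ 0) :
    ∑ k ∈ n.divisors, sqf c k = ∏ p ∈ n.primeFactors, (1 + c p) := by
  rw [Finset.prod_one_add]
  simp only [sqf]
  rw [← Finset.sum_filter]
  refine Finset.sum_nbij' (fun k => k.primeFactors) (fun t => ∏ p ∈ t, p) ?_ ?_ ?_ ?_ ?_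
  · intro k hk
    simp only [Finset.mem_filter, Nat.mem_divisors, Finset.mem_powerset] at hk ⊢
    exact Nat.primeFactors_mono hk.1.1 hn
  · intro t ht
    rw [Finset.mem_powerset] at ht
    simp only [Finset.mem_filter, Nat.mem_divisors]
    refine ⟨⟨(Finset.prod_dvd_prod_of_subset _ _ _ ht).trans (Nat.prod_primeFactors_dvd n), hn⟩, ?_⟩
    refine Finset.squarefree_prod_of_pairwise_isCoprime ?_ ?_
    · intro a ha b hb hab
      exact Nat.coprime_iff_isRelPrime.1 <|
        (Nat.coprime_primes (Nat.prime_of_mem_primeFactors (ht ha))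
          (Nat.prime_of_mem_primeFactors (ht hb))).2 hab
    · intro a ha
      exact (Nat.prime_of_mem_primeFactors (ht ha)).prime.squarefree
  · intro k hk
    simp only [Finset.mem_filter, Nat.mem_divisors] at hk
    exact Nat.prod_primeFactors_of_squarefree hk.2
  · intro t ht
    rw [Finset.mem_powerset] at ht
    exact Nat.primeFactors_prod fun p hp => Nat.prime_of_mem_primeFactors (ht hp)
  · intro k hk
    rfl

lemma sqf_mul_le {c : ℕ → ℝ} (h : ∀ p, p.Prime → 0 ≤ c p) (m n : ℕ) :
    sqf c (m * n) ≤ sqf c m * sqf c n := by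
  by_cases hs : Squarefree (m * n)
  · exact (sqf_mul c (Nat.coprime_of_squarefree_mul hs)).le
  · rw [sqf_of_not c hs]
    exact mul_nonneg (sqf_nonneg h m) (sqf_nonneg h n)

lemma prime_sub_one_pos {p : ℕ} (hp : p.Prime) : (1 : ℝ) ≤ (p : ℝ) - 1 := by
  have : (2 : ℝ) ≤ p := by exact_mod_cast hp.two_le
  linarith

lemma sqf_id {n : ℕ} (h : Squarefree n) : sqf (fun p => (p : ℝ)) n = n := by
  rw [sqf_of_sq _ h, ← Nat.cast_prod, Nat.prod_primeFactors_of_squarefree h]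

lemma moebius_eq_sqf (n : ℕ) : ((moebius n : ℤ) : ℝ) = sqf (fun _ => -1) n := by
  by_cases h : Squarefree n
  · rw [sqf_of_sq _ h, Finset.prod_const, moebius_apply_of_squarefree h]
    push_cast
    rw [← (ArithmeticFunction.cardDistinctFactors_eq_cardFactors_iff_squarefree h.ne_zero).2 h]
    rfl
  · rw [sqf_of_not _ h, moebius_eq_zero_of_not_squarefree h]; simp

/-- `n / φ(n)` as a product. -/
lemma div_totient {n : ℕ} (hn : n ≠ 0) :
    (n : ℝ) / (n.totient : ℝ) = ∏ p ∈ n.primeFactors, (1 + 1 / ((p : ℝ) - 1)) := by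
  have h := Nat.totient_eq_mul_prod_factors n
  have h' : (n.totient : ℝ) = n * ∏ p ∈ n.primeFactors, (1 - (p : ℝ)⁻¹) := by
    have h1 := congrArg (fun x : ℚ => (x : ℝ)) h
    push_cast at h1
    exact h1
  have hn' : (n : ℝ) ≠ 0 := by exact_mod_cast hn
  have h2 : (∏ p ∈ n.primeFactors, (1 + 1 / ((p : ℝ) - 1))) *
      ∏ p ∈ n.primeFactors, (1 - (p : ℝ)⁻¹) = 1 := by
    rw [← Finset.prod_mul_distrib]
    apply Finset.prod_eq_one
    intro p hp
    have := prime_sub_one_pos (Nat.prime_of_mem_primeFactors hp)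
    have h0 : (p : ℝ) ≠ 0 := by linarith
    have h1 : (p : ℝ) - 1 ≠ 0 := by linarith
    field_simp
    ring
  have h3 : (n.totient : ℝ) ≠ 0 := by
    exact_mod_cast (Nat.totient_pos.2 (Nat.pos_of_ne_zero hn)).ne'
  rw [div_eq_iff h3, h', mul_left_comm, h2, mul_one]

/-- `μ(r)²/φ(r)`. -/
noncomputable def wt (r : ℕ) : ℝ := sqf (fun p => 1 / ((p : ℝ) - 1)) r

lemma wt_eq (r : ℕ) : ((moebius r : ℤ) : ℝ) ^ 2 / (r.totient : ℝ) = wt r := by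
  unfold wt
  by_cases h : Squarefree r
  · have h1 : ((moebius r : ℤ) : ℝ) ^ 2 = 1 := by
      exact_mod_cast (moebius_sq_eq_one_of_squarefree h)
    have h0 : (r : ℝ) ≠ 0 := by exact_mod_cast h.ne_zero
    have h2 := div_totient h.ne_zero
    rw [h1, sqf_of_sq _ h]
    have h3 : (r : ℝ) * (1 / (r.totient : ℝ)) = r * ∏ p ∈ r.primeFactors, (1 / ((p : ℝ) - 1)) := by
      rw [mul_one_div, h2, ← sqf_of_sq (fun p => 1 + 1 / ((p : ℝ) - 1)) h]
      nth_rewrite 1 [← sqf_id h]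
      rw [sqf_of_sq _ h, sqf_of_sq _ h, ← Finset.prod_mul_distrib]
      apply Finset.prod_congr rfl
      intro p hp
      have := prime_sub_one_pos (Nat.prime_of_mem_primeFactors hp)
      have h1 : (p : ℝ) - 1 ≠ 0 := by linarith
      field_simp
      ring
    exact mul_left_cancel₀ h0 h3
  · rw [sqf_of_not _ h, moebius_eq_zero_of_not_squarefree h]; simp

lemma wt_c_nonneg : ∀ p : ℕ, p.Prime → (0 : ℝ) ≤ 1 / ((p : ℝ) - 1) := fun p hp => by
  have := prime_sub_one_pos hp
  positivity

lemma wt_nonneg (r : ℕ) : 0 ≤ wt r := sqf_nonneg wt_c_nonneg r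

/-- The prime values of the Dirichlet convolution quotient of `(n/φ(n))²`. -/
noncomputable def hF (p : ℕ) : ℝ := (2 * (p : ℝ) - 1) / ((p : ℝ) - 1) ^ 2

lemma hF_nonneg : ∀ p : ℕ, p.Prime → 0 ≤ hF p := fun p hp => by
  have := prime_sub_one_pos hp
  unfold hF
  exact div_nonneg (by linarith) (by positivity)

lemma hF_sqrt {p : ℕ} (hp : p.Prime) : hF p * Real.sqrt p ≤ if p < 7 then 9 else 1 := by
  have h1 := prime_sub_one_pos hp
  have hs := Real.sqrt_nonneg (p : ℝ)
  have hs2 := Real.sq_sqrt (show (0 : ℝ) ≤ p by positivity)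
  unfold hF
  have hpos : 0 < ((p : ℝ) - 1) ^ 2 := by positivity
  rw [div_mul_eq_mul_div]
  split_ifs with h
  · rw [div_le_iff₀ hpos]
    have h3 : Real.sqrt p ≤ 3 := by
      rw [Real.sqrt_le_left (by norm_num)]
      have : (p : ℝ) < 7 := by exact_mod_cast h
      linarith
    have h4 : (2 * (p : ℝ) - 1) * Real.sqrt p ≤ (2 * (p : ℝ) - 1) * 3 :=
      mul_le_mul_of_nonneg_left h3 (by linarith)
    nlinarith
  · rw [div_le_iff₀ hpos]
    push Not at h
    have h7 : (7 : ℝ) ≤ p := by exact_mod_cast h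
    rw [one_mul]
    apply le_of_sq_le_sq _ (by positivity)
    rw [mul_pow, hs2]
    obtain ⟨y, hy⟩ : ∃ y : ℝ, (p : ℝ) = y + 7 := ⟨p - 7, by ring⟩
    have hy0 : 0 ≤ y := by linarith
    rw [hy]
    have : ((y + 7 - 1) ^ 2) ^ 2 - (2 * (y + 7) - 1) ^ 2 * (y + 7) =
      y ^ 4 + 20 * y ^ 3 + 136 * y ^ 2 + 331 * y + 113 := by ring
    have : 0 ≤ y ^ 4 + 20 * y ^ 3 + 136 * y ^ 2 + 331 * y + 113 := by positivity
    linarith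

lemma sqf_hF_le (d : ℕ) : sqf hF d * Real.sqrt d ≤ 9 ^ 7 := by
  by_cases h : Squarefree d
  · have h1 : Real.sqrt d = sqf (fun p => Real.sqrt p) d := by
      rw [sqf_of_sq _ h, ← sqf_id h, sqf_of_sq _ h, Real.sqrt_prod]
      intro i _; positivity
    rw [h1, sqf_mul_sqf, sqf_of_sq _ h]
    calc ∏ p ∈ d.primeFactors, (hF p * Real.sqrt p)
        ≤ ∏ p ∈ d.primeFactors, (if p < 7 then (9 : ℝ) else 1) := by
          apply Finset.prod_le_prod
          · intro p hp
            exact mul_nonneg (hF_nonneg p (Nat.prime_of_mem_primeFactors hp)) (Real.sqrt_nonneg _)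
          · intro p hp
            exact hF_sqrt (Nat.prime_of_mem_primeFactors hp)
      _ = 9 ^ (d.primeFactors.filter (fun p => p < 7)).card := by
          rw [← Finset.prod_filter, Finset.prod_const]
      _ ≤ 9 ^ 7 := by
          apply pow_le_pow_right₀ (by norm_num)
          calc _ ≤ (Finset.range 7).card := Finset.card_le_card (by
                  intro p hp; simp at hp ⊢; exact hp.2)
            _ = 7 := by simp
  · rw [sqf_of_not _ h, zero_mul]; positivity

lemma exists_H : ∃ H : ℝ, 0 < H ∧ ∀ T : ℕ, ∑ d ∈ Finset.Icc 1 T, sqf hF d / d ≤ H := by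
  have hsum : Summable (fun d : ℕ => (9 : ℝ) ^ 7 * ((d : ℝ) ^ ((3 : ℝ) / 2))⁻¹) :=
    (Real.summable_nat_rpow_inv.2 (by norm_num)).mul_left _
  refine ⟨∑' d : ℕ, (9 : ℝ) ^ 7 * ((d : ℝ) ^ ((3 : ℝ) / 2))⁻¹ + 1, ?_, ?_⟩
  · have : 0 ≤ ∑' d : ℕ, (9 : ℝ) ^ 7 * ((d : ℝ) ^ ((3 : ℝ) / 2))⁻¹ :=
      tsum_nonneg fun d => by positivity
    linarith
  · intro T
    have h1 : ∑ d ∈ Finset.Icc 1 T, sqf hF d / d ≤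
        ∑ d ∈ Finset.Icc 1 T, (9 : ℝ) ^ 7 * ((d : ℝ) ^ ((3 : ℝ) / 2))⁻¹ := by
      apply Finset.sum_le_sum
      intro d hd
      have hd1 : (0 : ℝ) < d := by
        have := (Finset.mem_Icc.1 hd).1
        exact_mod_cast this
      have h2 : (d : ℝ) ^ ((3 : ℝ) / 2) = d * Real.sqrt d := by
        rw [Real.sqrt_eq_rpow, show (3 : ℝ) / 2 = 1 + 1 / 2 by norm_num, Real.rpow_add hd1,
          Real.rpow_one]
      have hs : 0 < Real.sqrt d := Real.sqrt_pos.2 hd1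
      rw [h2, ← div_eq_mul_inv, div_le_div_iff₀ hd1 (by positivity)]
      have := sqf_hF_le d
      nlinarith
    have h3 := hsum.sum_le_tsum (Finset.Icc 1 T) (fun d _ => by positivity)
    linarith

/-- Interchange of summation. -/
lemma sum_swap (c h : ℕ → ℝ) (hc : ∀ n, 0 ≤ c n) (hh : ∀ n, 0 ≤ h n) (T : ℕ) :
    ∑ v ∈ Finset.Icc 1 T, c v * ∑ d ∈ v.divisors, h d ≤
      ∑ d ∈ Finset.Icc 1 T, h d * ∑ w ∈ Finset.Icc 1 T, c (d * w) := by
  have h1 : ∀ v ∈ Finset.Icc 1 T, c v * ∑ d ∈ v.divisors, h d =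
      ∑ d ∈ Finset.Icc 1 T, ∑ w ∈ Finset.Icc 1 T, if d * w = v then h d * c (d * w) else 0 := by
    intro v hv
    rw [Finset.mem_Icc] at hv
    rw [Finset.mul_sum]
    have hsub : v.divisors ⊆ Finset.Icc 1 T := by
      intro d hd
      have := Nat.divisor_le hd
      have := Nat.pos_of_mem_divisors hd
      rw [Finset.mem_Icc]; omega
    rw [← Finset.sum_subset hsub]
    · apply Finset.sum_congr rfl
      intro d hd
      have hdv := (Nat.mem_divisors.1 hd).1
      have hd0 := Nat.pos_of_mem_divisors hd
      rw [Finset.sum_eq_single (v / d)]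
      · rw [if_pos (Nat.mul_div_cancel' hdv), Nat.mul_div_cancel' hdv, mul_comm]
      · intro w _ hw
        rw [if_neg]
        intro h
        apply hw
        rw [← h, Nat.mul_div_cancel_left _ hd0]
      · intro hnot
        exfalso
        apply hnot
        rw [Finset.mem_Icc]
        exact ⟨Nat.div_pos (Nat.le_of_dvd (by omega) hdv) hd0, (Nat.div_le_self _ _).trans hv.2⟩
    · intro d _ hd
      apply Finset.sum_eq_zero
      intro w _
      rw [if_neg]
      intro h
      exact hd (Nat.mem_divisors.2 ⟨⟨w, h.symm⟩, by omega⟩)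
  rw [Finset.sum_congr rfl h1, Finset.sum_comm]
  apply Finset.sum_le_sum
  intro d _
  rw [Finset.sum_comm, Finset.mul_sum]
  apply Finset.sum_le_sum
  intro w _
  rw [Finset.sum_ite_eq]
  split_ifs
  · exact le_rfl
  · exact mul_nonneg (hh _) (hc _)

lemma wt_sq (v : ℕ) : wt v ^ 2 = sqf (fun p => 1 / ((p : ℝ) - 1) ^ 2) v := by
  rw [pow_two, wt, sqf_mul_sqf]
  apply sqf_congr
  intro p _ _
  rw [one_div_mul_one_div, pow_two]

lemma one_add_hF {p : ℕ} (hp : p.Prime) :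
    1 + hF p = (p : ℝ) ^ 2 / ((p : ℝ) - 1) ^ 2 := by
  have := prime_sub_one_pos hp
  have h1 : (p : ℝ) - 1 ≠ 0 := by linarith
  unfold hF
  field_simp
  ring

lemma wt_sq_mul_le (v : ℕ) : wt v ^ 2 * (v : ℝ) ^ 2 ≤ ∑ d ∈ v.divisors, sqf hF d := by
  by_cases h : Squarefree v
  · rw [sum_sqf hF h.ne_zero, wt_sq, ← sqf_id h, pow_two, sqf_mul_sqf, sqf_mul_sqf,
      sqf_of_sq _ h]
    apply le_of_eq
    apply Finset.prod_congr rfl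
    intro p hp
    rw [one_add_hF (Nat.prime_of_mem_primeFactors hp)]
    ring
  · rw [wt, sqf_of_not _ h]
    simp only [ne_eq, OfNat.ofNat_ne_zero, not_false_eq_true, zero_pow, zero_mul]
    exact Finset.sum_nonneg fun d _ => sqf_nonneg hF_nonneg d

lemma wt_sigma_le (r : ℕ) : wt r * ∑ d ∈ r.divisors, (d : ℝ) ≤ ∑ d ∈ r.divisors, sqf hF d := by
  by_cases h : Squarefree r
  · have h1 : ∑ d ∈ r.divisors, (d : ℝ) = ∑ d ∈ r.divisors, sqf (fun p => (p : ℝ)) d := by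
      apply Finset.sum_congr rfl
      intro d hd
      rw [sqf_id (h.squarefree_of_dvd (Nat.mem_divisors.1 hd).1)]
    rw [h1, sum_sqf _ h.ne_zero, sum_sqf _ h.ne_zero, wt, sqf_of_sq _ h, ← Finset.prod_mul_distrib]
    apply Finset.prod_le_prod
    · intro p hp
      have := wt_c_nonneg p (Nat.prime_of_mem_primeFactors hp)
      positivity
    · intro p hp
      have hp' := Nat.prime_of_mem_primeFactors hp
      have := prime_sub_one_pos hp'
      rw [one_add_hF hp', div_mul_eq_mul_div, div_le_div_iff₀ (by linarith) (by positivity)]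
      nlinarith
  · rw [wt, sqf_of_not _ h, zero_mul]
    exact Finset.sum_nonneg fun d _ => sqf_nonneg hF_nonneg d

lemma sum_wt_sigma {H : ℝ} (hH : ∀ T : ℕ, ∑ d ∈ Finset.Icc 1 T, sqf hF d / d ≤ H) (M : ℕ) :
    ∑ r ∈ Finset.Icc 1 M, wt r * ∑ d ∈ r.divisors, (d : ℝ) ≤ H * M := by
  calc ∑ r ∈ Finset.Icc 1 M, wt r * ∑ d ∈ r.divisors, (d : ℝ)
      ≤ ∑ r ∈ Finset.Icc 1 M, (if r ≤ M then (1 : ℝ) else 0) * ∑ d ∈ r.divisors, sqf hF d := by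
        apply Finset.sum_le_sum
        intro r hr
        rw [if_pos (Finset.mem_Icc.1 hr).2, one_mul]
        exact wt_sigma_le r
    _ ≤ ∑ d ∈ Finset.Icc 1 M, sqf hF d *
          ∑ w ∈ Finset.Icc 1 M, (if d * w ≤ M then (1 : ℝ) else 0) :=
        sum_swap (fun r => if r ≤ M then (1 : ℝ) else 0) _ (fun n => by
          split_ifs <;> norm_num)
          (sqf_nonneg hF_nonneg) M
    _ ≤ ∑ d ∈ Finset.Icc 1 M, sqf hF d / d * M := by
        apply Finset.sum_le_sum
        intro d hd
        have hd0 : 0 < d := (Finset.mem_Icc.1 hd).1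
        rw [div_mul_eq_mul_div, mul_div_assoc]
        apply mul_le_mul_of_nonneg_left _ (sqf_nonneg hF_nonneg d)
        rw [← Finset.sum_filter, Finset.sum_const, nsmul_eq_mul, mul_one]
        have : ((Finset.Icc 1 M).filter (fun w => d * w ≤ M)).card ≤ M / d := by
          calc _ ≤ (Finset.Icc 1 (M / d)).card := Finset.card_le_card (by
                intro w hw
                simp only [Finset.mem_filter, Finset.mem_Icc] at hw ⊢
                refine ⟨hw.1.1, ?_⟩
                rw [Nat.le_div_iff_mul_le hd0, mul_comm]
                exact hw.2)
            _ = M / d := by simp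
        calc _ ≤ ((M / d : ℕ) : ℝ) := by exact_mod_cast this
          _ ≤ (M : ℝ) / d := Nat.cast_div_le
    _ ≤ H * M := by
        rw [← Finset.sum_mul]
        exact mul_le_mul_of_nonneg_right (hH M) (by positivity)

lemma sum_inv_sq {y : ℝ} (hy : 0 < y) (T : ℕ) :
    ∑ w ∈ Finset.Icc 1 T, (if y < w then 1 / (w : ℝ) ^ 2 else 0) ≤ 2 / y := by
  rw [← Finset.sum_filter]
  have h1 := sum_Ioo_inv_sq_le (α := ℝ) ⌊y⌋₊ (T + 1)
  calc _ ≤ ∑ i ∈ Finset.Ioo ⌊y⌋₊ (T + 1), ((i : ℝ) ^ 2)⁻¹ := by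
        simp only [one_div]
        apply Finset.sum_le_sum_of_subset_of_nonneg
        · intro w hw
          simp only [Finset.mem_filter, Finset.mem_Icc, Finset.mem_Ioo] at hw ⊢
          exact ⟨(Nat.floor_lt hy.le).2 hw.2, by omega⟩
        · intro i _ _; positivity
    _ ≤ 2 / (⌊y⌋₊ + 1) := h1
    _ ≤ 2 / y := div_le_div_of_nonneg_left (by norm_num) hy (Nat.lt_floor_add_one y).le

lemma sum_wt_sq_tail {H : ℝ} (hH : ∀ T : ℕ, ∑ d ∈ Finset.Icc 1 T, sqf hF d / d ≤ H)
    {x : ℝ} (hx : 0 < x) (T : ℕ) :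
    ∑ v ∈ Finset.Icc 1 T, (if x < v then wt v ^ 2 else 0) ≤ 2 * H / x := by
  calc ∑ v ∈ Finset.Icc 1 T, (if x < v then wt v ^ 2 else 0)
      ≤ ∑ v ∈ Finset.Icc 1 T, (if x < v then 1 / (v : ℝ) ^ 2 else 0) *
          ∑ d ∈ v.divisors, sqf hF d := by
        apply Finset.sum_le_sum
        intro v hv
        have hv0 : (0 : ℝ) < v := by
          have := (Finset.mem_Icc.1 hv).1
          exact_mod_cast this
        split_ifs
        · rw [div_mul_eq_mul_div, one_mul, le_div_iff₀ (by positivity)]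
          exact wt_sq_mul_le v
        · simp
    _ ≤ ∑ d ∈ Finset.Icc 1 T, sqf hF d *
          ∑ w ∈ Finset.Icc 1 T, (if x < ((d * w : ℕ) : ℝ) then 1 / ((d * w : ℕ) : ℝ) ^ 2 else 0) :=
        sum_swap (fun v : ℕ => if x < v then 1 / (v : ℝ) ^ 2 else 0) _ (fun n => by
          split_ifs <;> positivity)
          (sqf_nonneg hF_nonneg) T
    _ ≤ ∑ d ∈ Finset.Icc 1 T, sqf hF d / d * (2 / x) := by
        apply Finset.sum_le_sum
        intro d hd
        have hd0 : (0 : ℝ) < d := by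
          have := (Finset.mem_Icc.1 hd).1
          exact_mod_cast this
        rw [div_mul_eq_mul_div, mul_div_assoc]
        apply mul_le_mul_of_nonneg_left _ (sqf_nonneg hF_nonneg d)
        have h2 := sum_inv_sq (y := x / d) (by positivity) T
        have h3 : ∑ w ∈ Finset.Icc 1 T,
            (if x < ((d * w : ℕ) : ℝ) then 1 / ((d * w : ℕ) : ℝ) ^ 2 else 0) =
            (1 / (d : ℝ) ^ 2) *
              ∑ w ∈ Finset.Icc 1 T, (if x / d < w then 1 / (w : ℝ) ^ 2 else 0) := by
          rw [Finset.mul_sum]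
          apply Finset.sum_congr rfl
          intro w _
          have : (x < ((d * w : ℕ) : ℝ)) ↔ x / d < w := by
            rw [div_lt_iff₀ hd0]; push_cast; rw [mul_comm]
          simp only [this]
          split_ifs
          · push_cast
            rw [mul_pow, one_div_mul_one_div]
          · simp
        rw [h3]
        calc _ ≤ 1 / (d : ℝ) ^ 2 * (2 / (x / d)) := mul_le_mul_of_nonneg_left h2 (by positivity)
          _ = 2 / x / d := by field_simp
    _ ≤ 2 * H / x := by
        rw [← Finset.sum_mul]
        have := mul_le_mul_of_nonneg_right (hH T) (show 0 ≤ 2 / x by positivity)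
        calc _ ≤ _ := this
          _ = _ := by ring

/-- Prime values of the Ramanujan sum `c_t(j)`. -/
noncomputable def gJ (j p : ℕ) : ℝ := if p ∣ j then (p : ℝ) - 1 else -1

/-- Prime values of the summand of the singular series. -/
noncomputable def cf (q j p : ℕ) : ℝ :=
  if p ∣ q then 0 else if p ∣ j then 1 / ((p : ℝ) - 1) else -(1 / ((p : ℝ) - 1) ^ 2)

lemma sqf_cf (q j t : ℕ) :
    sqf (cf q j) t = if Nat.Coprime t q then sqf (gJ j) t * wt t ^ 2 else 0 := by
  split_ifs with h
  · rw [wt_sq, sqf_mul_sqf]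
    apply sqf_congr
    intro p hp hpt
    have h1 : ¬ p ∣ q := fun hq => by
      have := Nat.dvd_gcd hpt hq
      rw [h] at this
      exact hp.one_lt.ne' (Nat.dvd_one.1 this)
    have := prime_sub_one_pos hp
    have h2 : (p : ℝ) - 1 ≠ 0 := by linarith
    unfold cf gJ
    rw [if_neg h1]
    split_ifs
    · field_simp
    · ring
  · by_cases hs : Squarefree t
    · rw [sqf_of_sq _ hs]
      obtain ⟨p, hp, hpt, hpq⟩ := Nat.Prime.not_coprime_iff_dvd.1 h
      apply Finset.prod_eq_zero (Nat.mem_primeFactors.2 ⟨hp, hpt, hs.ne_zero⟩)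
      simp [cf, hpq]
    · exact sqf_of_not _ hs

lemma abs_sqf_cf_le (q : ℕ) {j : ℕ} (hj : j ≠ 0) (t : ℕ) :
    |sqf (cf q j) t| ≤ wt t ^ 2 * ∑ u ∈ t.divisors, (if u ∣ j then (u.totient : ℝ) else 0) := by
  by_cases hs : Squarefree t
  swap
  · rw [sqf_of_not _ hs, wt, sqf_of_not _ hs]; simp
  have h1 : ∑ u ∈ t.divisors, (if u ∣ j then (u.totient : ℝ) else 0) = (Nat.gcd t j : ℝ) := by
    rw [← Finset.sum_filter]
    have : t.divisors.filter (fun u => u ∣ j) = (Nat.gcd t j).divisors := by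
      ext u
      simp only [Finset.mem_filter, Nat.mem_divisors, Nat.dvd_gcd_iff, ne_eq, Nat.gcd_eq_zero_iff]
      have := hs.ne_zero
      tauto
    rw [this, ← Nat.cast_sum]
    exact_mod_cast congrArg (fun x : ℕ => (x : ℝ)) (Nat.sum_totient (Nat.gcd t j))
  rw [h1, abs_sqf]
  have h2 : sqf (fun p => if p ∣ j then (p : ℝ) else 1) t ≤ (Nat.gcd t j : ℝ) := by
    rw [sqf_of_sq _ hs, ← Finset.prod_filter]
    have : t.primeFactors.filter (fun p => p ∣ j) = (Nat.gcd t j).primeFactors := by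
      rw [Nat.primeFactors_gcd hs.ne_zero hj]
      ext p
      simp only [Finset.mem_filter, Finset.mem_inter, Nat.mem_primeFactors]
      tauto
    rw [this, ← Nat.cast_prod]
    exact_mod_cast Nat.le_of_dvd (Nat.gcd_pos_of_pos_left _ (Nat.pos_of_ne_zero hs.ne_zero))
      (Nat.prod_primeFactors_dvd _)
  refine le_trans ?_ (mul_le_mul_of_nonneg_left h2 (by positivity))
  rw [wt_sq, sqf_mul_sqf]
  apply sqf_le
  · intro p _; positivity
  · intro p hp
    have := prime_sub_one_pos hp
    have h3 : 0 < (p : ℝ) - 1 := by linarith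
    unfold cf
    split_ifs
    · rw [abs_zero]; positivity
    · rw [abs_zero]; positivity
    · rw [abs_of_pos (by positivity), div_mul_eq_mul_div, div_le_div_iff₀ h3 (by positivity)]
      nlinarith
    · rw [abs_neg, abs_of_pos (by positivity)]; simp

lemma wt_le (u : ℕ) : wt u ≤ 1 / (u.totient : ℝ) := by
  rw [← wt_eq]
  apply div_le_div_of_nonneg_right _ (by positivity)
  have : ((moebius u : ℤ) : ℝ) ^ 2 = ((if Squarefree u then 1 else 0 : ℤ) : ℝ) := by
    exact_mod_cast congrArg (fun x : ℤ => (x : ℝ)) (moebius_sq (n := u))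
  rw [this]
  split_ifs <;> simp

lemma totient_ratio_le {u j : ℕ} (hj : j ≠ 0) (h : u ∣ j) :
    (u : ℝ) / (u.totient : ℝ) ≤ (j : ℝ) / (j.totient : ℝ) := by
  have hu : u ≠ 0 := ne_zero_of_dvd_ne_zero hj h
  rw [div_totient hu, div_totient hj]
  apply Finset.prod_le_prod_of_subset_of_one_le
  · exact Nat.primeFactors_mono h hj
  · intro p hp
    have := wt_c_nonneg p (Nat.prime_of_mem_primeFactors hp)
    linarith
  · intro p hp _
    have := wt_c_nonneg p (Nat.prime_of_mem_primeFactors hp)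
    linarith

lemma cf_tail {H : ℝ} (hH0 : 0 < H) (hH : ∀ T : ℕ, ∑ d ∈ Finset.Icc 1 T, sqf hF d / d ≤ H)
    (q : ℕ) {j k : ℕ} (hj : j ≠ 0) (hk : k ≠ 0) {R : ℝ} (hR : 0 < R) (T : ℕ) :
    ∑ t ∈ Finset.Icc 1 T, (if R < (t : ℝ) * k then |sqf (cf q j) t| else 0) ≤
      2 * H * (k / R) * ((j : ℝ) * (j.divisors.card : ℝ) / (j.totient : ℝ)) := by
  have hk0 : (0 : ℝ) < k := by exact_mod_cast Nat.pos_of_ne_zero hk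
  calc ∑ t ∈ Finset.Icc 1 T, (if R < (t : ℝ) * k then |sqf (cf q j) t| else 0)
      ≤ ∑ t ∈ Finset.Icc 1 T, (if R < (t : ℝ) * k then wt t ^ 2 else 0) *
          ∑ u ∈ t.divisors, (if u ∣ j then (u.totient : ℝ) else 0) := by
        apply Finset.sum_le_sum
        intro t _
        split_ifs
        · exact abs_sqf_cf_le q hj t
        · simp
    _ ≤ ∑ u ∈ Finset.Icc 1 T, (if u ∣ j then (u.totient : ℝ) else 0) *
          ∑ w ∈ Finset.Icc 1 T, (if R < ((u * w : ℕ) : ℝ) * k then wt (u * w) ^ 2 else 0) :=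
        sum_swap (fun t : ℕ => if R < (t : ℝ) * k then wt t ^ 2 else 0)
          (fun u : ℕ => if u ∣ j then (u.totient : ℝ) else 0)
          (fun n => by split_ifs <;> positivity) (fun n => by split_ifs <;> positivity) T
    _ ≤ ∑ u ∈ Finset.Icc 1 T, (if u ∣ j then
          2 * H * (k / R) * ((j : ℝ) / (j.totient : ℝ)) else 0) := by
        apply Finset.sum_le_sum
        intro u hu
        have hu1 : 0 < u := (Finset.mem_Icc.1 hu).1
        have hu0 : (0 : ℝ) < u := by exact_mod_cast hu1
        have hphi : (0 : ℝ) < u.totient := by exact_mod_cast Nat.totient_pos.2 hu1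
        split_ifs with huj
        swap
        · simp
        have h1 : ∑ w ∈ Finset.Icc 1 T, (if R < ((u * w : ℕ) : ℝ) * k then wt (u * w) ^ 2 else 0) ≤
            wt u ^ 2 * ∑ w ∈ Finset.Icc 1 T, (if R / (u * k) < w then wt w ^ 2 else 0) := by
          rw [Finset.mul_sum]
          apply Finset.sum_le_sum
          intro w _
          have : (R < ((u * w : ℕ) : ℝ) * k) ↔ R / (u * k) < w := by
            rw [div_lt_iff₀ (by positivity)]; push_cast
            rw [show (u : ℝ) * w * k = w * (u * k) by ring]
          simp only [this]
          split_ifs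
          · rw [← mul_pow]
            exact pow_le_pow_left₀ (wt_nonneg _) (sqf_mul_le wt_c_nonneg u w) 2
          · simp
        have h2 := sum_wt_sq_tail hH (x := R / (u * k)) (by positivity) T
        have h3 := totient_ratio_le hj huj
        have h4 : (u.totient : ℝ) * wt u ^ 2 ≤ 1 / u.totient := by
          have := pow_le_pow_left₀ (wt_nonneg u) (wt_le u) 2
          calc _ ≤ (u.totient : ℝ) * (1 / (u.totient : ℝ)) ^ 2 :=
                mul_le_mul_of_nonneg_left this hphi.le
            _ = _ := by field_simp
        calc _ ≤ (u.totient : ℝ) * (wt u ^ 2 * (2 * H / (R / (u * k)))) := by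
              apply mul_le_mul_of_nonneg_left _ hphi.le
              exact h1.trans (mul_le_mul_of_nonneg_left h2 (by positivity))
          _ = ((u.totient : ℝ) * wt u ^ 2) * (2 * H / (R / (u * k))) := by ring
          _ ≤ (1 / u.totient) * (2 * H / (R / (u * k))) :=
              mul_le_mul_of_nonneg_right h4 (by positivity)
          _ = 2 * H * (k / R) * ((u : ℝ) / (u.totient : ℝ)) := by field_simp
          _ ≤ _ := mul_le_mul_of_nonneg_left h3 (by positivity)
    _ ≤ 2 * H * (k / R) * ((j : ℝ) * (j.divisors.card : ℝ) / (j.totient : ℝ)) := by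
        rw [← Finset.sum_filter, Finset.sum_const, nsmul_eq_mul]
        have h5 : ((Finset.Icc 1 T).filter (fun u => u ∣ j)).card ≤ j.divisors.card :=
          Finset.card_le_card (by
            intro u hu
            simp only [Finset.mem_filter] at hu
            exact Nat.mem_divisors.2 ⟨hu.2, hj⟩)
        have h6 : (((Finset.Icc 1 T).filter (fun u => u ∣ j)).card : ℝ) ≤ j.divisors.card := by
          exact_mod_cast h5
        calc _ ≤ (j.divisors.card : ℝ) * (2 * H * (k / R) * ((j : ℝ) / (j.totient : ℝ))) :=
              mul_le_mul_of_nonneg_right h6 (by positivity)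
          _ = _ := by ring

lemma sum_range_le_Icc (f : ℕ → ℝ) (h0 : f 0 = 0) (T : ℕ) :
    ∑ t ∈ Finset.range (T + 1), f t = ∑ t ∈ Finset.Icc 1 T, f t := by
  rw [Finset.sum_range_succ', h0, add_zero, Finset.range_eq_Ico, Finset.sum_Ico_add' f 0 T 1]
  rfl

lemma summable_abs_cf (q : ℕ) {j : ℕ} (hj : j ≠ 0) : Summable fun t => |sqf (cf q j) t| := by
  obtain ⟨H, hH0, hH⟩ := exists_H
  refine summable_of_sum_range_le (c := 2 * H * ((1 : ℕ) / (1 / 2)) *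
    ((j : ℝ) * (j.divisors.card : ℝ) / (j.totient : ℝ))) (fun n => abs_nonneg _) ?_
  intro n
  calc ∑ t ∈ Finset.range n, |sqf (cf q j) t|
      ≤ ∑ t ∈ Finset.range (n + 1), |sqf (cf q j) t| :=
        Finset.sum_le_sum_of_subset_of_nonneg (Finset.range_subset_range.2 (by omega))
          fun _ _ _ => abs_nonneg _
    _ = ∑ t ∈ Finset.Icc 1 n, |sqf (cf q j) t| := sum_range_le_Icc _ (by simp [sqf_zero]) n
    _ = ∑ t ∈ Finset.Icc 1 n, (if (1 / 2 : ℝ) < (t : ℝ) * (1 : ℕ) then |sqf (cf q j) t| else 0) := by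
        apply Finset.sum_congr rfl
        intro t ht
        rw [if_pos]
        have : (1 : ℝ) ≤ t := by exact_mod_cast (Finset.mem_Icc.1 ht).1
        push_cast
        linarith
    _ ≤ _ := cf_tail hH0 hH q hj one_ne_zero (by norm_num) n

lemma hasProd_cf (q : ℕ) {j : ℕ} (hj : j ≠ 0) :
    HasProd (fun p : Nat.Primes => 1 + cf q j p) (∑' t, sqf (cf q j) t) := by
  have h := EulerProduct.eulerProduct_hasProd (f := sqf (cf q j)) (sqf_one _)
    (fun {m n} h => sqf_mul _ h) (summable_abs_cf q hj) (sqf_zero _)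
  have he : (fun p : Nat.Primes => 1 + cf q j p) =
      fun p : Nat.Primes => ∑' e : ℕ, sqf (cf q j) ((p : ℕ) ^ e) := by
    funext p
    symm
    rw [tsum_eq_sum (s := Finset.range 2)]
    · rw [Finset.sum_range_succ, Finset.sum_range_one, pow_zero, pow_one, sqf_one,
        sqf_prime _ p.2]
    · intro e he
      exact sqf_prime_pow _ p.2 (by have := Finset.mem_range.not.1 he; omega)
  rw [he]
  exact h

lemma twinC_hasProd : HasProd (fun p : Nat.Primes =>
    (if 2 < (p : ℕ) then 1 - 1 / (((p : ℕ) : ℝ) - 1) ^ 2 else 1)) twinC := by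
  have h := hasProd_cf 2 one_ne_zero
  have h2 : (fun p : Nat.Primes => 1 + cf 2 1 p) = (fun p : Nat.Primes =>
    (if 2 < (p : ℕ) then 1 - 1 / (((p : ℕ) : ℝ) - 1) ^ 2 else 1)) := by
    funext p
    have hp := p.2
    unfold cf
    by_cases h2 : (p : ℕ) = 2
    · simp [h2]
    · have : 2 < (p : ℕ) := lt_of_le_of_ne hp.two_le (Ne.symm h2)
      rw [if_pos this, if_neg, if_neg]
      · ring
      · rw [Nat.dvd_one]; exact hp.ne_one
      · rw [Nat.prime_dvd_prime_iff_eq hp Nat.prime_two]; exact h2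
  rw [h2] at h
  unfold twinC
  rw [h.tprod_eq]
  exact h

lemma singSeries_eq {q j : ℕ} (hq : q ≠ 0) (hj : j ≠ 0) :
    singSeries (j * q) = ((q : ℝ) / (q.totient : ℝ)) * ∑' t, sqf (cf q j) t := by
  have hjq : j * q ≠ 0 := mul_ne_zero hj hq
  have hP := hasProd_cf q hj
  unfold singSeries
  by_cases h2 : 2 ∣ j * q
  · rw [if_pos ⟨h2, hjq⟩]
    -- the correction factors
    set u : ℕ → ℝ := fun p => if p ∣ j * q then
      (if 2 < p then (1 + cf q j p) / (1 - 1 / ((p : ℝ) - 1) ^ 2) else 1 + cf q j p) else 1 with hu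
    have hsplit : (fun p : Nat.Primes => 1 + cf q j p) = (fun p : Nat.Primes =>
        (if 2 < (p : ℕ) then 1 - 1 / (((p : ℕ) : ℝ) - 1) ^ 2 else 1) * u p) := by
      funext p
      have hp := p.2
      simp only [hu]
      by_cases hd : (p : ℕ) ∣ j * q
      · rw [if_pos hd]
        by_cases h3 : 2 < (p : ℕ)
        · rw [if_pos h3, if_pos h3]
          have : (3 : ℝ) ≤ ((p : ℕ) : ℝ) := by exact_mod_cast h3
          have h4 : 1 - 1 / (((p : ℕ) : ℝ) - 1) ^ 2 ≠ 0 := by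
            have : 1 / (((p : ℕ) : ℝ) - 1) ^ 2 < 1 := by
              rw [div_lt_one (by nlinarith)]; nlinarith
            linarith
          rw [mul_div_cancel₀ _ h4]
        · rw [if_neg h3, if_neg h3, one_mul]
      · rw [if_neg hd, mul_one]
        have h3 : (p : ℕ) ≠ 2 := fun h => hd (h ▸ h2)
        have h4 : 2 < (p : ℕ) := lt_of_le_of_ne hp.two_le (Ne.symm h3)
        rw [if_pos h4]
        unfold cf
        rw [if_neg, if_neg]
        · ring
        · exact fun h => hd (h.mul_right q)
        · exact fun h => hd (h.mul_left j)
    have hfin : HasProd (fun p : Nat.Primes => u p) (∏ p ∈ (j * q).primeFactors, u p) := by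
      have h5 := hasProd_prod_of_ne_finset_one (L := SummationFilter.unconditional _)
        (f := fun p : Nat.Primes => u p)
        (s := (j * q).primeFactors.subtype Nat.Prime) (by
          intro p hp
          simp only [hu]
          rw [if_neg]
          intro hd
          exact hp (Finset.mem_subtype.2 (Nat.mem_primeFactors.2 ⟨p.2, hd, hjq⟩)))
      convert h5 using 1
      exact (Finset.prod_subtype_of_mem u fun p hp => Nat.prime_of_mem_primeFactors hp).symm
    have huniq : ∑' t, sqf (cf q j) t = twinC * ∏ p ∈ (j * q).primeFactors, u p := by
      rw [hsplit] at hP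
      exact hP.unique (twinC_hasProd.mul hfin)
    rw [huniq, div_totient hq]
    have hw : ∏ p ∈ q.primeFactors, (1 + 1 / ((p : ℝ) - 1)) =
        ∏ p ∈ (j * q).primeFactors, (if p ∣ q then (1 + 1 / ((p : ℝ) - 1)) else 1) := by
      rw [← Finset.prod_filter]
      apply Finset.prod_congr _ fun _ _ => rfl
      ext p
      simp only [Finset.mem_filter, Nat.mem_primeFactors]
      constructor
      · rintro ⟨h1, h2, h3⟩; exact ⟨⟨h1, h2.mul_left j, hjq⟩, h2⟩
      · rintro ⟨⟨h1, _, _⟩, h2⟩; exact ⟨h1, h2, hq⟩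
    have hmain : (∏ p ∈ (j * q).primeFactors, (if p ∣ q then (1 + 1 / ((p : ℝ) - 1)) else 1)) *
        ∏ p ∈ (j * q).primeFactors, u p =
        2 * ∏ p ∈ (j * q).primeFactors.filter (fun p => 2 < p), ((p : ℝ) - 1) / ((p : ℝ) - 2) := by
      rw [← Finset.prod_mul_distrib, Finset.prod_filter]
      have h2m : 2 ∈ (j * q).primeFactors := Nat.mem_primeFactors.2 ⟨Nat.prime_two, h2, hjq⟩
      rw [← Finset.mul_prod_erase _ _ h2m]
      rw [← Finset.mul_prod_erase _ (fun p : ℕ => if 2 < p then ((p : ℝ) - 1) / ((p : ℝ) - 2) else 1) h2m]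
      rw [if_neg (lt_irrefl 2), one_mul]
      congr 1
      · simp only [hu]
        rw [if_pos h2, if_neg (lt_irrefl 2)]
        unfold cf
        by_cases hq2 : 2 ∣ q
        · rw [if_pos hq2, if_pos hq2]; norm_num
        · have : 2 ∣ j := by
            rcases Nat.prime_two.dvd_mul.1 h2 with h | h
            · exact h
            · exact absurd h hq2
          rw [if_neg hq2, if_neg hq2, if_pos this]; norm_num
      · apply Finset.prod_congr rfl
        intro p hp
        rw [Finset.mem_erase] at hp
        have hpp := Nat.prime_of_mem_primeFactors hp.2
        have hpd := Nat.dvd_of_mem_primeFactors hp.2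
        have h3 : 2 < p := lt_of_le_of_ne hpp.two_le (Ne.symm hp.1)
        have h3' : (3 : ℝ) ≤ (p : ℝ) := by exact_mod_cast h3
        have e1 : (p : ℝ) - 1 ≠ 0 := by linarith
        have e2 : (p : ℝ) - 2 ≠ 0 := by linarith
        have e3 : (p : ℝ) ≠ 0 := by linarith
        have e4 : 1 - 1 / ((p : ℝ) - 1) ^ 2 = p * (p - 2) / ((p : ℝ) - 1) ^ 2 := by
          field_simp; ring
        have e5 : 1 + 1 / ((p : ℝ) - 1) = p / (p - 1) := by
          field_simp; ring
        simp only [hu]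
        rw [if_pos hpd, if_pos h3, if_pos h3, e4]
        unfold cf
        by_cases hqp : p ∣ q
        · rw [if_pos hqp, if_pos hqp, e5]
          field_simp; ring
        · have : p ∣ j := by
            rcases hpp.dvd_mul.1 hpd with h | h
            · exact h
            · exact absurd h hqp
          rw [if_neg hqp, if_neg hqp, if_pos this, e5]
          field_simp
    rw [hw]
    linear_combination (-twinC) * hmain
  · rw [if_neg (fun h => h2 h.1)]
    have hz : ∑' t, sqf (cf q j) t = 0 := by
      refine hP.unique ?_
      have hf : (1 + cf q j ((⟨2, Nat.prime_two⟩ : Nat.Primes) : ℕ)) = 0 := by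
        unfold cf
        rw [if_neg, if_neg]
        · norm_num
        · exact fun h => h2 (h.mul_right q)
        · exact fun h => h2 (h.mul_left j)
      unfold HasProd
      apply tendsto_const_nhds.congr'
      rw [SummationFilter.unconditional_filter]
      filter_upwards [Filter.eventually_ge_atTop {(⟨2, Nat.prime_two⟩ : Nat.Primes)}] with s hs
      exact (Finset.prod_eq_zero (hs (Finset.mem_singleton_self _)) hf).symm
    rw [hz, mul_zero]

lemma count_modEq (N L v : ℕ) (hL : 0 < L) :
    |((((Finset.Icc 1 N).filter (fun n => n ≡ v [MOD L])).card : ℕ) : ℝ) - (N : ℝ) / L| ≤ 1 := by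
  have h := Nat.Ioc_filter_modEq_card 0 N hL v
  have hI : Finset.Icc 1 N = Finset.Ioc 0 N := by ext; simp [Nat.succ_le_iff]
  rw [hI]
  have hL' : (0 : ℚ) < L := by exact_mod_cast hL
  have hle : ⌊(((0 : ℕ) : ℚ) - v) / L⌋ ≤ ⌊((N : ℚ) - v) / L⌋ := by
    apply Int.floor_le_floor
    apply div_le_div_of_nonneg_right _ hL'.le
    push_cast
    have : (0 : ℚ) ≤ N := by positivity
    linarith
  rw [max_eq_left (by linarith)] at h
  have hq : |((((Finset.Ioc 0 N).filter (fun n => n ≡ v [MOD L])).card : ℕ) : ℚ) - (N : ℚ) / L|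
      ≤ 1 := by
    have h' : ((((Finset.Ioc 0 N).filter (fun n => n ≡ v [MOD L])).card : ℕ) : ℚ) =
        (⌊((N : ℚ) - v) / L⌋ : ℚ) - (⌊(((0 : ℕ) : ℚ) - v) / L⌋ : ℚ) := by
      exact_mod_cast congrArg (fun x : ℤ => (x : ℚ)) h
    rw [h']
    have a1 := Int.floor_le (((N : ℚ) - v) / L)
    have a2 := Int.lt_floor_add_one (((N : ℚ) - v) / L)
    have a3 := Int.floor_le ((((0 : ℕ) : ℚ) - v) / L)
    have a4 := Int.lt_floor_add_one ((((0 : ℕ) : ℚ) - v) / L)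
    have a5 : ((N : ℚ) - v) / L - (((0 : ℕ) : ℚ) - v) / L = (N : ℚ) / L := by
      push_cast; ring
    rw [abs_le]
    constructor <;> linarith
  have hr := (Rat.cast_le (K := ℝ)).2 hq
  push_cast at hr
  exact hr

lemma exists_sol {q j a d e : ℕ} (he : e ≠ 0) (hd : Nat.Coprime d q)
    (heq : Nat.Coprime e q) (hg : Nat.gcd d e ∣ j) :
    ∃ n, n ≡ a [MOD q] ∧ d ∣ n ∧ e ∣ n + j * q := by
  have h1 : 0 ≡ (e - 1) * (j * q) [MOD Nat.gcd d e] := by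
    apply Nat.ModEq.symm
    rw [Nat.modEq_zero_iff_dvd]
    exact (hg.mul_right q).mul_left _
  obtain ⟨n1, h2, h3⟩ := Nat.chineseRemainder' h1
  have hc : Nat.Coprime q (Nat.lcm d e) :=
    (Nat.Coprime.coprime_dvd_left (Nat.lcm_dvd_mul d e) (Nat.Coprime.mul_left hd heq)).symm
  obtain ⟨n, h4, h5⟩ := Nat.chineseRemainder hc a n1
  refine ⟨n, h4, ?_, ?_⟩
  · rw [← Nat.modEq_zero_iff_dvd]
    exact (h5.of_dvd (Nat.dvd_lcm_left d e)).trans h2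
  · rw [← Nat.modEq_zero_iff_dvd]
    have h6 := (h5.of_dvd (Nat.dvd_lcm_right d e)).trans h3
    refine (h6.add_right (j * q)).trans ?_
    rw [Nat.modEq_zero_iff_dvd]
    refine ⟨j * q, ?_⟩
    obtain ⟨e', rfl⟩ := Nat.exists_eq_succ_of_ne_zero he
    simp only [Nat.succ_eq_add_one, Nat.add_sub_cancel]
    ring

/-- Main term of the counting function. -/
noncomputable def mn (N q j d e : ℕ) : ℝ :=
  if Nat.Coprime d q ∧ Nat.Coprime e q ∧ Nat.gcd d e ∣ j then
    (N : ℝ) / ((q : ℝ) * (Nat.lcm d e : ℝ)) else 0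

lemma cnt_bound (N : ℕ) {q j a d e : ℕ} (hq : q ≠ 0) (ha : Nat.gcd a q = 1) (hd : d ≠ 0)
    (he : e ≠ 0) :
    |((((Finset.Icc 1 N).filter (fun n : ℕ => (n : ZMod q) = (a : ZMod q))).filter
      (fun n => d ∣ n ∧ e ∣ n + j * q)).card : ℝ) - mn N q j d e| ≤ 1 := by
  rw [Finset.filter_filter]
  unfold mn
  split_ifs with hgood
  · obtain ⟨h1, h2, h3⟩ := hgood
    obtain ⟨n0, m1, m2, m3⟩ := exists_sol (a := a) he h1 h2 h3
    have hc : Nat.Coprime q (Nat.lcm d e) :=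
      (Nat.Coprime.coprime_dvd_left (Nat.lcm_dvd_mul d e) (Nat.Coprime.mul_left h1 h2)).symm
    have hL : 0 < q * Nat.lcm d e :=
      Nat.mul_pos (Nat.pos_of_ne_zero hq) (Nat.lcm_pos (Nat.pos_of_ne_zero hd)
        (Nat.pos_of_ne_zero he))
    have key := count_modEq N (q * Nat.lcm d e) n0 hL
    have hfil : (Finset.Icc 1 N).filter (fun n : ℕ => (n : ZMod q) = (a : ZMod q) ∧
        (d ∣ n ∧ e ∣ n + j * q)) =
        (Finset.Icc 1 N).filter (fun n => n ≡ n0 [MOD q * Nat.lcm d e]) := by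
      apply Finset.filter_congr
      intro n _
      rw [ZMod.natCast_eq_natCast_iff, ← Nat.modEq_and_modEq_iff_modEq_mul hc]
      constructor
      · rintro ⟨k1, k2, k3⟩
        refine ⟨k1.trans m1.symm, Nat.mod_lcm ?_ ?_⟩
        · exact ((Nat.modEq_zero_iff_dvd).2 k2).trans ((Nat.modEq_zero_iff_dvd).2 m2).symm
        · exact Nat.ModEq.add_right_cancel' (j * q)
            (((Nat.modEq_zero_iff_dvd).2 k3).trans ((Nat.modEq_zero_iff_dvd).2 m3).symm)
      · rintro ⟨k1, k2⟩
        refine ⟨k1.trans m1, ?_, ?_⟩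
        · rw [← Nat.modEq_zero_iff_dvd]
          exact (k2.of_dvd (Nat.dvd_lcm_left d e)).trans ((Nat.modEq_zero_iff_dvd).2 m2)
        · rw [← Nat.modEq_zero_iff_dvd]
          exact ((k2.of_dvd (Nat.dvd_lcm_right d e)).add_right (j * q)).trans
            ((Nat.modEq_zero_iff_dvd).2 m3)
    rw [hfil]
    push_cast at key
    exact key
  · have hfil : (Finset.Icc 1 N).filter (fun n : ℕ => (n : ZMod q) = (a : ZMod q) ∧
        (d ∣ n ∧ e ∣ n + j * q)) = ∅ := by
      apply Finset.filter_eq_empty_iff.2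
      rintro n _ ⟨k1, k2, k3⟩
      rw [ZMod.natCast_eq_natCast_iff] at k1
      have hnq : Nat.Coprime n q := by
        have := k1.gcd_eq
        rw [Nat.coprime_iff_gcd_eq_one, this, ha]
      have c1 : Nat.Coprime d q := Nat.Coprime.coprime_dvd_left k2 hnq
      have c2 : Nat.Coprime e q := by
        apply Nat.Coprime.coprime_dvd_left k3
        rw [Nat.coprime_add_mul_right_left]
        exact hnq
      apply hgood
      refine ⟨c1, c2, ?_⟩
      have g1 : Nat.gcd d e ∣ j * q :=
        (Nat.dvd_add_right ((Nat.gcd_dvd_left d e).trans k2)).1 ((Nat.gcd_dvd_right d e).trans k3)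
      exact (Nat.Coprime.coprime_dvd_left (Nat.gcd_dvd_left d e) c1).dvd_of_dvd_mul_right g1
    rw [hfil]
    simp

/-- `∑_{r ≤ M, d ∣ r} μ²(r)/φ(r)`. -/
noncomputable def Aw (M d : ℕ) : ℝ := ∑ r ∈ Finset.Icc 1 M, if d ∣ r then wt r else 0

lemma Aw_nonneg (M d : ℕ) : 0 ≤ Aw M d :=
  Finset.sum_nonneg fun r _ => by
    split_ifs
    · exact wt_nonneg r
    · exact le_rfl

/-- Coefficients of `λ_R` as a divisor sum. -/
noncomputable def Xc (M d : ℕ) : ℝ := (d : ℝ) * ((moebius d : ℤ) : ℝ) * Aw M d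

lemma sum_divisors_eq_Icc (f : ℕ → ℝ) {M r : ℕ} (hr : r ∈ Finset.Icc 1 M) :
    ∑ d ∈ r.divisors, f d = ∑ d ∈ Finset.Icc 1 M, if d ∣ r then f d else 0 := by
  rw [← Finset.sum_filter]
  apply Finset.sum_congr _ fun _ _ => rfl
  rw [Finset.mem_Icc] at hr
  ext d
  simp only [Nat.mem_divisors, Finset.mem_filter, Finset.mem_Icc]
  constructor
  · rintro ⟨h1, h2⟩
    have := Nat.le_of_dvd (by omega) h1
    have := Nat.pos_of_dvd_of_pos h1 (by omega)
    exact ⟨by omega, h1⟩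
  · rintro ⟨_, h⟩; exact ⟨h, by omega⟩

lemma lamR_eq (R : ℝ) (n : ℕ) :
    lamR R n = ∑ d ∈ Finset.Icc 1 ⌊R⌋₊, if d ∣ n then Xc ⌊R⌋₊ d else 0 := by
  unfold lamR
  set M := ⌊R⌋₊
  have h1 : ∀ r ∈ Finset.Icc 1 M, (((moebius r : ℤ) : ℝ) ^ 2 / (r.totient : ℝ)) *
      ∑ d ∈ (Nat.gcd r n).divisors, (d : ℝ) * ((moebius d : ℤ) : ℝ) =
      ∑ d ∈ Finset.Icc 1 M, if d ∣ n then
        (d : ℝ) * ((moebius d : ℤ) : ℝ) * (if d ∣ r then wt r else 0) else 0 := by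
    intro r hr
    have hr1 := (Finset.mem_Icc.1 hr).1
    have h2 : (Nat.gcd r n).divisors = r.divisors.filter (fun d => d ∣ n) := by
      ext d
      simp only [Finset.mem_filter, Nat.mem_divisors, Nat.dvd_gcd_iff, ne_eq, Nat.gcd_eq_zero_iff]
      have : r ≠ 0 := by omega
      tauto
    rw [wt_eq, h2, Finset.sum_filter, sum_divisors_eq_Icc _ hr, Finset.mul_sum]
    apply Finset.sum_congr rfl
    intro d _
    split_ifs <;> ring
  rw [Finset.sum_congr rfl h1, Finset.sum_comm]
  apply Finset.sum_congr rfl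
  intro d _
  split_ifs
  · rw [Xc, Aw, Finset.mul_sum]
  · simp

lemma corr_eq (R : ℝ) (S : Finset ℕ) (k : ℕ) :
    ∑ n ∈ S, lamR R n * lamR R (n + k) =
      ∑ d ∈ Finset.Icc 1 ⌊R⌋₊, ∑ e ∈ Finset.Icc 1 ⌊R⌋₊, Xc ⌊R⌋₊ d * Xc ⌊R⌋₊ e *
        ((S.filter (fun n => d ∣ n ∧ e ∣ n + k)).card : ℝ) := by
  set M := ⌊R⌋₊ with hM
  have h1 : ∀ n ∈ S, lamR R n * lamR R (n + k) = ∑ d ∈ Finset.Icc 1 M, ∑ e ∈ Finset.Icc 1 M,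
      Xc M d * Xc M e * (if d ∣ n ∧ e ∣ n + k then 1 else 0) := by
    intro n _
    rw [lamR_eq, lamR_eq, Finset.sum_mul_sum]
    apply Finset.sum_congr rfl
    intro d _
    apply Finset.sum_congr rfl
    intro e _
    by_cases a1 : d ∣ n <;> by_cases a2 : e ∣ n + k <;> simp [a1, a2, hM]
  rw [Finset.sum_congr rfl h1, Finset.sum_comm]
  apply Finset.sum_congr rfl
  intro d _
  rw [Finset.sum_comm]
  apply Finset.sum_congr rfl
  intro e _
  rw [← Finset.mul_sum, ← Finset.sum_filter, Finset.sum_const, nsmul_eq_mul, mul_one]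

lemma abs_moebius_le (d : ℕ) : |((moebius d : ℤ) : ℝ)| ≤ 1 := by
  rw [moebius_eq_sqf, abs_sqf]
  unfold sqf
  split_ifs <;> simp

lemma sum_abs_Xc {H : ℝ} (hH : ∀ T : ℕ, ∑ d ∈ Finset.Icc 1 T, sqf hF d / d ≤ H) (M : ℕ) :
    ∑ d ∈ Finset.Icc 1 M, |Xc M d| ≤ H * M := by
  refine le_trans ?_ (sum_wt_sigma hH M)
  calc ∑ d ∈ Finset.Icc 1 M, |Xc M d| ≤ ∑ d ∈ Finset.Icc 1 M, (d : ℝ) * Aw M d := by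
        apply Finset.sum_le_sum
        intro d _
        rw [Xc, abs_mul, abs_mul, abs_of_nonneg (Aw_nonneg M d), Nat.abs_cast]
        apply mul_le_mul_of_nonneg_right _ (Aw_nonneg M d)
        calc _ ≤ (d : ℝ) * 1 := mul_le_mul_of_nonneg_left (abs_moebius_le d) (by positivity)
          _ = d := mul_one _
    _ = ∑ r ∈ Finset.Icc 1 M, wt r * ∑ d ∈ r.divisors, (d : ℝ) := by
        simp only [Aw, Finset.mul_sum]
        rw [Finset.sum_comm]
        apply Finset.sum_congr rfl
        intro r hr
        rw [← Finset.mul_sum, sum_divisors_eq_Icc (fun d => (d : ℝ)) hr, Finset.mul_sum]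
        apply Finset.sum_congr rfl
        intro d _
        split_ifs <;> ring
    _ ≤ _ := le_rfl

lemma corr_main {H : ℝ} (hH : ∀ T : ℕ, ∑ d ∈ Finset.Icc 1 T, sqf hF d / d ≤ H) {R : ℝ}
    (hR : 2 ≤ R) (N : ℕ) {q j a : ℕ} (hq : q ≠ 0) (ha : Nat.gcd a q = 1) :
    |∑ n ∈ (Finset.Icc 1 N).filter (fun n : ℕ => (n : ZMod q) = (a : ZMod q)),
          lamR R n * lamR R (n + j * q) -
      ∑ d ∈ Finset.Icc 1 ⌊R⌋₊, ∑ e ∈ Finset.Icc 1 ⌊R⌋₊, Xc ⌊R⌋₊ d * Xc ⌊R⌋₊ e * mn N q j d e| ≤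
      H ^ 2 * R ^ 2 := by
  rw [corr_eq, ← Finset.sum_sub_distrib]
  set M := ⌊R⌋₊ with hM
  have hMR : (M : ℝ) ≤ R := Nat.floor_le (by linarith)
  have hX := sum_abs_Xc hH M
  have hX0 : 0 ≤ ∑ d ∈ Finset.Icc 1 M, |Xc M d| := Finset.sum_nonneg fun _ _ => abs_nonneg _
  calc _ ≤ ∑ d ∈ Finset.Icc 1 M, ∑ e ∈ Finset.Icc 1 M, |Xc M d| * |Xc M e| := by
        refine (Finset.abs_sum_le_sum_abs _ _).trans ?_
        apply Finset.sum_le_sum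
        intro d hd
        rw [← Finset.sum_sub_distrib]
        refine (Finset.abs_sum_le_sum_abs _ _).trans ?_
        apply Finset.sum_le_sum
        intro e he
        rw [← mul_sub, abs_mul, abs_mul]
        have hd1 := (Finset.mem_Icc.1 hd).1
        have he1 := (Finset.mem_Icc.1 he).1
        have := cnt_bound N (j := j) hq ha (show d ≠ 0 by omega) (show e ≠ 0 by omega)
        calc _ ≤ |Xc M d| * |Xc M e| * 1 := mul_le_mul_of_nonneg_left this (by positivity)
          _ = _ := mul_one _
    _ = (∑ d ∈ Finset.Icc 1 M, |Xc M d|) ^ 2 := by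
        rw [pow_two, Finset.sum_mul_sum]
    _ ≤ (H * M) ^ 2 := pow_le_pow_left₀ hX0 hX 2
    _ = H ^ 2 * (M : ℝ) ^ 2 := by ring
    _ ≤ H ^ 2 * R ^ 2 := by
        apply mul_le_mul_of_nonneg_left _ (by positivity)
        exact pow_le_pow_left₀ (by positivity) hMR 2

/-- Truncated sum over divisors of `q`. -/
noncomputable def Sq (M q t : ℕ) : ℝ := ∑ k ∈ q.divisors, if t * k ≤ M then wt k else 0

lemma moebius_cop (q d : ℕ) : (if Nat.Coprime d q then ((moebius d : ℤ) : ℝ) else 0) =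
    sqf (fun p => if p ∣ q then 0 else -1) d := by
  rw [moebius_eq_sqf]
  split_ifs with h
  · apply sqf_congr
    intro p hp hpd
    rw [if_neg]
    intro hq
    have := Nat.dvd_gcd hpd hq
    rw [h] at this
    exact hp.one_lt.ne' (Nat.dvd_one.1 this)
  · by_cases hs : Squarefree d
    · rw [sqf_of_sq _ hs]
      obtain ⟨p, hp, hpt, hpq⟩ := Nat.Prime.not_coprime_iff_dvd.1 h
      symm
      apply Finset.prod_eq_zero (Nat.mem_primeFactors.2 ⟨hp, hpt, hs.ne_zero⟩)
      simp [hpq]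
    · rw [sqf_of_not _ hs]

lemma sum_moebius_cop (q : ℕ) {k : ℕ} (hk : Squarefree k) :
    ∑ d ∈ k.divisors, (if Nat.Coprime d q then ((moebius d : ℤ) : ℝ) else 0) =
      if k ∣ q then 1 else 0 := by
  simp only [moebius_cop]
  rw [sum_sqf _ hk.ne_zero]
  split_ifs with h
  · apply Finset.prod_eq_one
    intro p hp
    rw [if_pos ((Nat.dvd_of_mem_primeFactors hp).trans h)]
    norm_num
  · have : ∃ p ∈ k.primeFactors, ¬ p ∣ q := by
      by_contra hcon
      push Not at hcon
      apply h
      rw [← Nat.prod_primeFactors_of_squarefree hk]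
      exact Finset.prod_primes_dvd q (fun p hp => (Nat.prime_of_mem_primeFactors hp).prime) hcon
    obtain ⟨p, hp, hpq⟩ := this
    apply Finset.prod_eq_zero hp
    rw [if_neg hpq]
    norm_num

lemma inner_W {q t r : ℕ} (htq : Nat.Coprime t q) (hr : Squarefree r) :
    ∑ d ∈ r.divisors, (if t ∣ d ∧ Nat.Coprime d q then ((moebius d : ℤ) : ℝ) else 0) =
      if t ∣ r ∧ r / t ∣ q then ((moebius t : ℤ) : ℝ) else 0 := by
  by_cases htr : t ∣ r
  · obtain ⟨k, rfl⟩ := htr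
    have ht0 : 0 < t := Nat.pos_of_ne_zero fun h => hr.ne_zero (by simp [h])
    have hk0 : k ≠ 0 := fun h => hr.ne_zero (by simp [h])
    have hk : Squarefree k := hr.squarefree_of_dvd (Dvd.intro_left t rfl)
    have htk : Nat.Coprime t k := Nat.coprime_of_squarefree_mul hr
    rw [Nat.mul_div_cancel_left _ ht0]
    have h1 : ∑ d ∈ (t * k).divisors,
        (if t ∣ d ∧ Nat.Coprime d q then ((moebius d : ℤ) : ℝ) else 0) =
        ∑ d ∈ k.divisors, ((moebius t : ℤ) : ℝ) *
          (if Nat.Coprime d q then ((moebius d : ℤ) : ℝ) else 0) := by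
      have h2 : ∀ d ∈ (t * k).divisors,
          (if t ∣ d ∧ Nat.Coprime d q then ((moebius d : ℤ) : ℝ) else 0) =
          if t ∣ d then (if Nat.Coprime d q then ((moebius d : ℤ) : ℝ) else 0) else 0 := by
        intro d _
        rw [ite_and]
      rw [Finset.sum_congr rfl h2, ← Finset.sum_filter]
      refine Finset.sum_nbij' (fun d => d / t) (fun d => t * d) ?_ ?_ ?_ ?_ ?_
      · intro d hd
        simp only [Finset.mem_filter, Nat.mem_divisors] at hd ⊢
        obtain ⟨⟨h3, _⟩, d', rfl⟩ := hd
        rw [Nat.mul_div_cancel_left _ ht0]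
        exact ⟨Nat.dvd_of_mul_dvd_mul_left ht0 h3, hk0⟩
      · intro d hd
        simp only [Finset.mem_filter, Nat.mem_divisors] at hd ⊢
        exact ⟨⟨Nat.mul_dvd_mul_left t hd.1, hr.ne_zero⟩, Dvd.intro d rfl⟩
      · intro d hd
        simp only [Finset.mem_filter] at hd
        exact Nat.mul_div_cancel' hd.2
      · intro d _
        exact Nat.mul_div_cancel_left _ ht0
      · intro d hd
        simp only [Finset.mem_filter, Nat.mem_divisors] at hd
        obtain ⟨⟨h3, _⟩, d', rfl⟩ := hd
        rw [Nat.mul_div_cancel_left _ ht0]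
        have h4 : d' ∣ k := Nat.dvd_of_mul_dvd_mul_left ht0 h3
        have h5 : Nat.Coprime t d' := Nat.Coprime.coprime_dvd_right h4 htk
        have h6 : Nat.Coprime (t * d') q ↔ Nat.Coprime d' q := by
          rw [Nat.coprime_mul_iff_left]; tauto
        simp only [h6]
        split_ifs
        · rw [isMultiplicative_moebius.map_mul_of_coprime h5]; push_cast; ring
        · simp
    rw [h1, ← Finset.mul_sum, sum_moebius_cop q hk]
    simp
  · rw [if_neg (fun h => htr h.1)]
    apply Finset.sum_eq_zero
    intro d hd
    rw [if_neg]
    exact fun h => htr (h.1.trans (Nat.mem_divisors.1 hd).1)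

/-- The inner sum after opening the gcd. -/
noncomputable def Yc (M q t d : ℕ) : ℝ :=
  if t ∣ d ∧ Nat.Coprime d q then ((moebius d : ℤ) : ℝ) * Aw M d else 0

lemma sum_Yc (M : ℕ) {q t : ℕ} (hq : q ≠ 0) (ht : 0 < t) :
    ∑ d ∈ Finset.Icc 1 M, Yc M q t d =
      if Nat.Coprime t q then ((moebius t : ℤ) : ℝ) * wt t * Sq M q t else 0 := by
  by_cases htq : Nat.Coprime t q
  swap
  · rw [if_neg htq]
    apply Finset.sum_eq_zero
    intro d _
    rw [Yc, if_neg]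
    exact fun h => htq (Nat.Coprime.coprime_dvd_left h.1 h.2)
  rw [if_pos htq]
  have h1 : ∑ d ∈ Finset.Icc 1 M, Yc M q t d = ∑ r ∈ Finset.Icc 1 M, wt r *
      (if t ∣ r ∧ r / t ∣ q then ((moebius t : ℤ) : ℝ) else 0) := by
    have h2 : ∀ d ∈ Finset.Icc 1 M, Yc M q t d = ∑ r ∈ Finset.Icc 1 M,
        wt r * (if d ∣ r then
          (if t ∣ d ∧ Nat.Coprime d q then ((moebius d : ℤ) : ℝ) else 0) else 0) := by
      intro d _
      unfold Yc Aw
      split_ifs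
      · rw [Finset.mul_sum]
        apply Finset.sum_congr rfl
        intro r _
        split_ifs <;> ring
      · simp
    rw [Finset.sum_congr rfl h2, Finset.sum_comm]
    apply Finset.sum_congr rfl
    intro r hr
    rw [← Finset.mul_sum, ← sum_divisors_eq_Icc (fun d =>
      (if t ∣ d ∧ Nat.Coprime d q then ((moebius d : ℤ) : ℝ) else 0)) hr]
    by_cases hs : Squarefree r
    · rw [inner_W htq hs]
    · rw [wt, sqf_of_not _ hs, zero_mul, zero_mul]
  rw [h1, Sq, Finset.mul_sum]
  simp only [mul_ite, mul_zero]
  rw [← Finset.sum_filter, ← Finset.sum_filter]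
  refine Finset.sum_nbij' (fun d => d / t) (fun d => t * d) ?_ ?_ ?_ ?_ ?_
  · intro d hd
    simp only [Finset.mem_filter, Nat.mem_divisors, Finset.mem_Icc] at hd ⊢
    obtain ⟨h3, h4, h5⟩ := hd
    refine ⟨⟨h5, hq⟩, ?_⟩
    rw [Nat.mul_div_cancel' h4]
    exact h3.2
  · intro d hd
    simp only [Finset.mem_filter, Nat.mem_divisors, Finset.mem_Icc] at hd ⊢
    refine ⟨⟨?_, hd.2⟩, Dvd.intro d rfl, ?_⟩
    · exact Nat.mul_pos ht (Nat.pos_of_dvd_of_pos hd.1.1 (Nat.pos_of_ne_zero hq))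
    · rw [Nat.mul_div_cancel_left _ ht]; exact hd.1.1
  · intro d hd
    simp only [Finset.mem_filter] at hd
    exact Nat.mul_div_cancel' hd.2.1
  · intro d _
    exact Nat.mul_div_cancel_left _ ht
  · intro d hd
    simp only [Finset.mem_filter] at hd
    obtain ⟨h3, ⟨k, rfl⟩, h5⟩ := hd
    rw [Nat.mul_div_cancel_left _ ht] at h5 ⊢
    rw [wt, sqf_mul _ (Nat.Coprime.coprime_dvd_right h5 htq)]
    unfold wt
    ring

lemma gcd_open (j : ℕ) {M d e : ℕ} (hd : d ∈ Finset.Icc 1 M) (hs : Squarefree d) :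
    (if Nat.gcd d e ∣ j then (Nat.gcd d e : ℝ) else 0) =
      ∑ t ∈ Finset.Icc 1 M, if t ∣ d ∧ t ∣ e then sqf (gJ j) t else 0 := by
  rw [Finset.mem_Icc] at hd
  have hg0 : 0 < Nat.gcd d e := Nat.gcd_pos_of_pos_left _ hd.1
  have hgs : Squarefree (Nat.gcd d e) := hs.squarefree_of_dvd (Nat.gcd_dvd_left d e)
  have hgM : Nat.gcd d e ∈ Finset.Icc 1 M :=
    Finset.mem_Icc.2 ⟨hg0, (Nat.gcd_le_left _ hd.1).trans hd.2⟩
  have h1 : ∑ t ∈ Finset.Icc 1 M, (if t ∣ d ∧ t ∣ e then sqf (gJ j) t else 0) =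
      ∑ t ∈ (Nat.gcd d e).divisors, sqf (gJ j) t := by
    rw [sum_divisors_eq_Icc _ hgM]
    simp only [Nat.dvd_gcd_iff]
  rw [h1, sum_sqf _ hg0.ne']
  split_ifs with h
  · nth_rewrite 1 [← sqf_id hgs]
    rw [sqf_of_sq _ hgs]
    apply Finset.prod_congr rfl
    intro p hp
    rw [gJ, if_pos ((Nat.dvd_of_mem_primeFactors hp).trans h)]
    ring
  · have : ∃ p ∈ (Nat.gcd d e).primeFactors, ¬ p ∣ j := by
      by_contra hcon
      push Not at hcon
      apply h
      rw [← Nat.prod_primeFactors_of_squarefree hgs]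
      exact Finset.prod_primes_dvd j (fun p hp => (Nat.prime_of_mem_primeFactors hp).prime) hcon
    obtain ⟨p, hp, hpj⟩ := this
    symm
    apply Finset.prod_eq_zero hp
    rw [gJ, if_neg hpj]
    norm_num

lemma main_identity (M N : ℕ) {q : ℕ} (j : ℕ) (hq : q ≠ 0) :
    ∑ d ∈ Finset.Icc 1 M, ∑ e ∈ Finset.Icc 1 M, Xc M d * Xc M e * mn N q j d e =
      (N : ℝ) / q * ∑ t ∈ Finset.Icc 1 M, sqf (cf q j) t * Sq M q t ^ 2 := by
  have hq' : (q : ℝ) ≠ 0 := by exact_mod_cast hq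
  have h1 : ∀ d ∈ Finset.Icc 1 M, ∀ e ∈ Finset.Icc 1 M, Xc M d * Xc M e * mn N q j d e =
      ∑ t ∈ Finset.Icc 1 M, (N : ℝ) / q * (sqf (gJ j) t * (Yc M q t d * Yc M q t e)) := by
    intro d hd e he
    have hd0 : d ≠ 0 := by have := (Finset.mem_Icc.1 hd).1; omega
    have he0 : e ≠ 0 := by have := (Finset.mem_Icc.1 he).1; omega
    by_cases hs : Squarefree d
    swap
    · have hmu : ((moebius d : ℤ) : ℝ) = 0 := by
        rw [moebius_eq_zero_of_not_squarefree hs]; simp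
      simp [Xc, Yc, hmu]
    by_cases hc : Nat.Coprime d q ∧ Nat.Coprime e q
    swap
    · have hz : mn N q j d e = 0 := by
        rw [mn, if_neg]; exact fun h => hc ⟨h.1, h.2.1⟩
      rw [hz, mul_zero]
      symm
      apply Finset.sum_eq_zero
      intro t _
      have : Yc M q t d * Yc M q t e = 0 := by
        unfold Yc
        by_cases h3 : Nat.Coprime d q
        · have h4 : ¬ Nat.Coprime e q := fun h => hc ⟨h3, h⟩
          simp [h4]
        · simp [h3]
      rw [this]; ring
    have hL : (Nat.lcm d e : ℝ) ≠ 0 := by exact_mod_cast Nat.lcm_ne_zero hd0 he0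
    have hgl : (Nat.gcd d e : ℝ) * (Nat.lcm d e : ℝ) = d * e := by
      exact_mod_cast Nat.gcd_mul_lcm d e
    have h5 : (d : ℝ) * e * mn N q j d e =
        (N : ℝ) / q * (if Nat.gcd d e ∣ j then (Nat.gcd d e : ℝ) else 0) := by
      unfold mn
      by_cases hg : Nat.gcd d e ∣ j
      · rw [if_pos ⟨hc.1, hc.2, hg⟩, if_pos hg, ← hgl]
        field_simp
      · rw [if_neg (fun h => hg h.2.2), if_neg hg]; simp
    calc Xc M d * Xc M e * mn N q j d e
        = ((moebius d : ℤ) : ℝ) * Aw M d * (((moebius e : ℤ) : ℝ) * Aw M e) *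
            ((d : ℝ) * e * mn N q j d e) := by unfold Xc; ring
      _ = _ := by
          rw [h5, gcd_open j hd hs, Finset.mul_sum, Finset.mul_sum]
          apply Finset.sum_congr rfl
          intro t _
          unfold Yc
          by_cases a0 : t ∣ d ∧ t ∣ e
          · rw [if_pos a0, if_pos ⟨a0.1, hc.1⟩, if_pos ⟨a0.2, hc.2⟩]
            ring
          · rw [if_neg a0]
            by_cases a1 : t ∣ d
            · rw [if_neg (fun h : t ∣ e ∧ Nat.Coprime e q => a0 ⟨a1, h.1⟩)]
              ring
            · rw [if_neg (fun h : t ∣ d ∧ Nat.Coprime d q => a1 h.1)]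
              ring
  rw [Finset.sum_congr rfl fun d hd => Finset.sum_congr rfl (h1 d hd)]
  have h2 : ∑ d ∈ Finset.Icc 1 M, ∑ e ∈ Finset.Icc 1 M, ∑ t ∈ Finset.Icc 1 M,
      (N : ℝ) / q * (sqf (gJ j) t * (Yc M q t d * Yc M q t e)) =
      ∑ t ∈ Finset.Icc 1 M, (N : ℝ) / q * (sqf (gJ j) t *
        ((∑ d ∈ Finset.Icc 1 M, Yc M q t d) * ∑ e ∈ Finset.Icc 1 M, Yc M q t e)) := by
    have h3 : ∀ d ∈ Finset.Icc 1 M, ∑ e ∈ Finset.Icc 1 M, ∑ t ∈ Finset.Icc 1 M,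
      (N : ℝ) / q * (sqf (gJ j) t * (Yc M q t d * Yc M q t e)) = ∑ t ∈ Finset.Icc 1 M,
        ∑ e ∈ Finset.Icc 1 M, (N : ℝ) / q * (sqf (gJ j) t * (Yc M q t d * Yc M q t e)) :=
      fun d _ => Finset.sum_comm
    rw [Finset.sum_congr rfl h3, Finset.sum_comm]
    apply Finset.sum_congr rfl
    intro t _
    rw [Finset.sum_mul_sum, Finset.mul_sum, Finset.mul_sum]
    apply Finset.sum_congr rfl
    intro d _
    rw [Finset.mul_sum, Finset.mul_sum]
  rw [h2, Finset.mul_sum]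
  apply Finset.sum_congr rfl
  intro t ht
  rw [sum_Yc M hq (Finset.mem_Icc.1 ht).1, sqf_cf]
  split_ifs
  · by_cases hs : Squarefree t
    · have hmu : ((moebius t : ℤ) : ℝ) ^ 2 = 1 := by
        exact_mod_cast (moebius_sq_eq_one_of_squarefree hs)
      linear_combination (N / q * sqf (gJ j) t * wt t ^ 2 * Sq M q t ^ 2) * hmu
    · rw [sqf_of_not _ hs]; ring
  · simp

lemma gGY_nonneg (q : ℕ) : 0 ≤ gGY q := by
  unfold gGY
  apply Finset.prod_nonneg
  intro p hp
  have := prime_sub_one_pos (Nat.prime_of_mem_primeFactors hp)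
  have h1 : 0 < (p : ℝ) - 1 := by linarith
  positivity

lemma sum_wt {q : ℕ} (hq : q ≠ 0) : ∑ k ∈ q.divisors, wt k = (q : ℝ) / (q.totient : ℝ) := by
  unfold wt
  rw [sum_sqf _ hq, div_totient hq]

lemma sum_wt_mul {q : ℕ} (hq : q ≠ 0) : ∑ k ∈ q.divisors, wt k * k = gGY q := by
  have h1 : ∀ k ∈ q.divisors, wt k * k = sqf (fun p => (p : ℝ) / ((p : ℝ) - 1)) k := by
    intro k _
    by_cases hs : Squarefree k
    · rw [← sqf_id hs, wt, sqf_mul_sqf]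
      apply sqf_congr
      intro p _ _
      ring
    · rw [wt, sqf_of_not _ hs, sqf_of_not _ hs, zero_mul]
  rw [Finset.sum_congr rfl h1, sum_sqf _ hq]
  rfl

lemma Sq_nonneg (M q t : ℕ) : 0 ≤ Sq M q t :=
  Finset.sum_nonneg fun r _ => by
    split_ifs
    · exact wt_nonneg r
    · exact le_rfl

lemma Sq_compl {R : ℝ} (hR : 0 < R) {q : ℕ} (hq : q ≠ 0) (t : ℕ) :
    (q : ℝ) / (q.totient : ℝ) - Sq ⌊R⌋₊ q t =
      ∑ k ∈ q.divisors, if R < (t : ℝ) * k then wt k else 0 := by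
  rw [← sum_wt hq, Sq, ← Finset.sum_sub_distrib]
  apply Finset.sum_congr rfl
  intro k _
  have : t * k ≤ ⌊R⌋₊ ↔ ¬ (R < (t : ℝ) * k) := by
    rw [Nat.le_floor_iff hR.le, not_lt]
    push_cast
    rfl
  simp only [this]
  split_ifs <;> simp_all

lemma Sq_zero {M q t : ℕ} (ht : M < t) : Sq M q t = 0 := by
  apply Finset.sum_eq_zero
  intro k hk
  rw [if_neg]
  have := Nat.pos_of_mem_divisors hk
  have : t * 1 ≤ t * k := Nat.mul_le_mul_left t this
  omega

lemma trunc_bound {H : ℝ} (hH0 : 0 < H)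
    (hH : ∀ T : ℕ, ∑ d ∈ Finset.Icc 1 T, sqf hF d / d ≤ H)
    {q j : ℕ} (hq : q ≠ 0) (hj : j ≠ 0) {R : ℝ} (hR : 0 < R) :
    |∑ t ∈ Finset.Icc 1 ⌊R⌋₊, sqf (cf q j) t * Sq ⌊R⌋₊ q t ^ 2 -
      ((q : ℝ) / q.totient) ^ 2 * ∑' t, sqf (cf q j) t| ≤
      4 * H * ((q : ℝ) / q.totient) * gGY q *
        ((j : ℝ) * (j.divisors.card : ℝ) / (j.totient : ℝ)) / R := by
  set M := ⌊R⌋₊ with hM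
  set f := sqf (cf q j) with hf
  set B := (q : ℝ) / q.totient with hB
  set J := (j : ℝ) * (j.divisors.card : ℝ) / (j.totient : ℝ) with hJ
  have hB0 : 0 ≤ B := by positivity
  have hcompl : ∀ t, B - Sq M q t = ∑ k ∈ q.divisors, if R < (t : ℝ) * k then wt k else 0 :=
    fun t => Sq_compl hR hq t
  have hSB : ∀ t, Sq M q t ≤ B := by
    intro t
    have := hcompl t
    have h0 : 0 ≤ ∑ k ∈ q.divisors, if R < (t : ℝ) * k then wt k else 0 :=
      Finset.sum_nonneg fun k _ => by
        split_ifs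
        · exact wt_nonneg k
        · exact le_rfl
    linarith
  have hf0 : f 0 = 0 := sqf_zero _
  have hsabs : Summable fun t => |f t| := summable_abs_cf q hj
  have hsum : Summable f := hsabs.of_abs
  have hfin : ∀ t ∉ Finset.Icc 1 M, f t * Sq M q t ^ 2 = 0 := by
    intro t ht
    rcases Nat.eq_zero_or_pos t with rfl | h
    · rw [hf0, zero_mul]
    · have : M < t := by
        rw [Finset.mem_Icc] at ht
        omega
      rw [Sq_zero this]; ring
  have e1 : ∑ t ∈ Finset.Icc 1 M, f t * Sq M q t ^ 2 = ∑' t, f t * Sq M q t ^ 2 :=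
    (tsum_eq_sum hfin).symm
  have hs1 : Summable fun t => f t * Sq M q t ^ 2 := summable_of_ne_finset_zero hfin
  have e2 : ∑ t ∈ Finset.Icc 1 M, f t * Sq M q t ^ 2 - B ^ 2 * ∑' t, f t =
      ∑' t, (f t * Sq M q t ^ 2 - B ^ 2 * f t) := by
    rw [e1, ← tsum_mul_left, hs1.tsum_sub (hsum.mul_left _)]
  rw [e2]
  have hpart : ∀ T : ℕ, ∑ t ∈ Finset.Icc 1 T, |f t * Sq M q t ^ 2 - B ^ 2 * f t| ≤
      4 * H * B * gGY q * J / R := by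
    intro T
    calc ∑ t ∈ Finset.Icc 1 T, |f t * Sq M q t ^ 2 - B ^ 2 * f t|
        ≤ ∑ t ∈ Finset.Icc 1 T, 2 * B * ∑ k ∈ q.divisors,
            wt k * (if R < (t : ℝ) * k then |f t| else 0) := by
          apply Finset.sum_le_sum
          intro t _
          have a1 : f t * Sq M q t ^ 2 - B ^ 2 * f t =
              -(f t * ((B - Sq M q t) * (B + Sq M q t))) := by ring
          have a2 : 0 ≤ B - Sq M q t := by linarith [hSB t]
          have a3 : 0 ≤ B + Sq M q t := by linarith [Sq_nonneg M q t]
          rw [a1, abs_neg, abs_mul, abs_of_nonneg (mul_nonneg a2 a3)]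
          have a4 : ∑ k ∈ q.divisors, wt k * (if R < (t : ℝ) * k then |f t| else 0) =
              |f t| * (B - Sq M q t) := by
            rw [hcompl t, Finset.mul_sum]
            apply Finset.sum_congr rfl
            intro k _
            split_ifs <;> ring
          rw [a4]
          have a5 : B + Sq M q t ≤ 2 * B := by linarith [hSB t]
          have a6 := mul_le_mul_of_nonneg_left a5 (mul_nonneg (abs_nonneg (f t)) a2)
          linarith
      _ = 2 * B * ∑ k ∈ q.divisors, wt k *
            ∑ t ∈ Finset.Icc 1 T, (if R < (t : ℝ) * k then |f t| else 0) := by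
          rw [← Finset.mul_sum, Finset.sum_comm]
          simp only [Finset.mul_sum]
      _ ≤ 2 * B * ∑ k ∈ q.divisors, wt k * (2 * H * (k / R) * J) := by
          apply mul_le_mul_of_nonneg_left _ (by positivity)
          apply Finset.sum_le_sum
          intro k hk
          apply mul_le_mul_of_nonneg_left _ (wt_nonneg k)
          exact cf_tail hH0 hH q hj (Nat.pos_of_mem_divisors hk).ne' hR T
      _ = 4 * H * B * gGY q * J / R := by
          rw [← sum_wt_mul hq, Finset.mul_sum, Finset.mul_sum, Finset.sum_mul, Finset.sum_div]
          apply Finset.sum_congr rfl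
          intro k _
          ring
  have hrange : ∀ n, ∑ t ∈ Finset.range n, |f t * Sq M q t ^ 2 - B ^ 2 * f t| ≤
      4 * H * B * gGY q * J / R := by
    intro n
    calc _ ≤ ∑ t ∈ Finset.range (n + 1), |f t * Sq M q t ^ 2 - B ^ 2 * f t| :=
          Finset.sum_le_sum_of_subset_of_nonneg (Finset.range_subset_range.2 (by omega))
            fun _ _ _ => abs_nonneg _
      _ = ∑ t ∈ Finset.Icc 1 n, |f t * Sq M q t ^ 2 - B ^ 2 * f t| :=
          sum_range_le_Icc _ (by simp [hf0]) n
      _ ≤ _ := hpart n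
  have hsa : Summable fun t => |f t * Sq M q t ^ 2 - B ^ 2 * f t| :=
    summable_of_sum_range_le (fun _ => abs_nonneg _) hrange
  calc _ ≤ ∑' t, |f t * Sq M q t ^ 2 - B ^ 2 * f t| := by
        have := norm_tsum_le_tsum_norm (f := fun t => f t * Sq M q t ^ 2 - B ^ 2 * f t)
          (by simpa only [Real.norm_eq_abs] using hsa)
        simpa only [Real.norm_eq_abs] using this
    _ ≤ _ := Real.tsum_le_of_sum_range_le (fun _ => abs_nonneg _) hrange

theorem prop4_lamR_correlation :
    ∃ C : ℝ, 0 < C ∧ ∀ (N q j a : ℕ) (R : ℝ),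
      1 ≤ N → 1 ≤ q → 1 ≤ j → Nat.gcd a q = 1 → 2 ≤ R →
      |(∑ n ∈ (Finset.Icc 1 N).filter (fun n : ℕ => (n : ZMod q) = (a : ZMod q)),
          lamR R n * lamR R (n + j * q))
        - ((N : ℝ) / (q.totient : ℝ)) * singSeries (j * q)|
      ≤ C * (((N : ℝ) * gGY q / ((q.totient : ℝ) * R))
            * ((j : ℝ) * (j.divisors.card : ℝ) / (j.totient : ℝ)) + R ^ 2) := by
  obtain ⟨H, hH0, hH⟩ := exists_H
  refine ⟨4 * H + H ^ 2, by positivity, ?_⟩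
  intro N q j a R _ hq hj ha hR
  have hq0 : q ≠ 0 := by omega
  have hj0 : j ≠ 0 := by omega
  have h1 := corr_main hH hR N (j := j) hq0 ha
  rw [main_identity _ _ _ hq0] at h1
  have h2 := trunc_bound hH0 hH hq0 hj0 (R := R) (by linarith)
  have hqR : (0 : ℝ) < q := by exact_mod_cast hq
  have hphi : (0 : ℝ) < q.totient := by exact_mod_cast Nat.totient_pos.2 hq
  have hR0 : (0 : ℝ) < R := by linarith
  rw [singSeries_eq hq0 hj0]
  set A := ∑ n ∈ (Finset.Icc 1 N).filter (fun n : ℕ => (n : ZMod q) = (a : ZMod q)),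
          lamR R n * lamR R (n + j * q)
  set B := ∑ t ∈ Finset.Icc 1 ⌊R⌋₊, sqf (cf q j) t * Sq ⌊R⌋₊ q t ^ 2
  set D := ∑' t, sqf (cf q j) t
  set J := (j : ℝ) * (j.divisors.card : ℝ) / (j.totient : ℝ) with hJ
  have hJ0 : 0 ≤ J := by positivity
  have hg0 : 0 ≤ gGY q := gGY_nonneg q
  have e1 : (N : ℝ) / q.totient * ((q : ℝ) / q.totient * D) =
      (N : ℝ) / q * (((q : ℝ) / q.totient) ^ 2 * D) := by
    field_simp
  have e2 : A - (N : ℝ) / q.totient * ((q : ℝ) / q.totient * D) =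
      (A - (N : ℝ) / q * B) + (N : ℝ) / q * (B - ((q : ℝ) / q.totient) ^ 2 * D) := by
    rw [e1]; ring
  rw [e2]
  have hN : (0 : ℝ) ≤ (N : ℝ) / q := by positivity
  have h3 : |(N : ℝ) / q * (B - ((q : ℝ) / q.totient) ^ 2 * D)| ≤
      4 * H * ((N : ℝ) * gGY q / ((q.totient : ℝ) * R) * J) := by
    rw [abs_mul, abs_of_nonneg hN]
    calc _ ≤ (N : ℝ) / q * (4 * H * ((q : ℝ) / q.totient) * gGY q * J / R) :=
          mul_le_mul_of_nonneg_left h2 hN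
      _ = _ := by field_simp
  have h4 : 0 ≤ (N : ℝ) * gGY q / ((q.totient : ℝ) * R) * J := by positivity
  have h5 := abs_add_le (A - (N : ℝ) / q * B)
    ((N : ℝ) / q * (B - ((q : ℝ) / q.totient) ^ 2 * D))
  have h6 : 0 ≤ H ^ 2 * ((N : ℝ) * gGY q / ((q.totient : ℝ) * R) * J) := by positivity
  have h7 : 0 ≤ 4 * H * R ^ 2 := by positivity
  linarith
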